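/- Let Δ be a simplicial complex over a field k with depth k[Δ] = ℓ, and suppose H̃_{ℓ−1}(Δ; k) = 0. Choose T ∈ Δ of minimal cardinality such that H̃_{ℓ−|T|−1}(lk_Δ(T); k) ≠ 0. Let J ⊆ V(Δ) be an independent set and suppose T = T′ ∪ {b} with b ∈ J. Then, setting Δ̃ = ast_Δ(J), one has H̃_{ℓ−|T′|−2}(lk_Δ̃(T′); k) ≠ 0; in particular, depth k[Δ̃] = ℓ − 1. -/

import Mathlib

open Finset

/-- An abstract simplicial complex on vertex type `V`, given by a finite, downward closed
family of finite subsets of `V` (its faces). -/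
structure SComplex (V : Type) [DecidableEq V] where
  faces : Finset (Finset V)
  down_closed : ∀ ⦃s t : Finset V⦄, s ∈ faces → t ⊆ s → t ∈ faces

namespace SComplex

variable {V : Type} [DecidableEq V]

/-- `K.rank = d = dim k[Δ] = dim Δ + 1` is the maximal cardinality of a face of `K`. -/
def rank (K : SComplex V) : ℕ := K.faces.sup Finset.card

/-- `F` is a facet (maximal face) of `K`. -/
def IsFacet (K : SComplex V) (F : Finset V) : Prop :=
  F ∈ K.faces ∧ ∀ G ∈ K.faces, F ⊆ G → F = G

/-- `K` is pure: all facets have the maximal cardinality `K.rank`. -/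
def Pure (K : SComplex V) : Prop := ∀ F : Finset V, K.IsFacet F → F.card = K.rank

/-- The link `lk_K(T) = {G ∈ K | T ∪ G ∈ K, T ∩ G = ∅}`. -/
def link (K : SComplex V) (T : Finset V) : SComplex V where
  faces := K.faces.filter fun G => Disjoint T G ∧ T ∪ G ∈ K.faces
  down_closed := by
    intro s t hs hts
    simp only [Finset.mem_filter] at hs ⊢
    exact ⟨K.down_closed hs.1 hts, hs.2.1.mono_right hts,
      K.down_closed hs.2.2 (Finset.union_subset_union_right hts)⟩

/-- The anti-star `ast_K(T) = {G ∈ K | T ∩ G = ∅}`. -/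
def antistar (K : SComplex V) (T : Finset V) : SComplex V where
  faces := K.faces.filter fun G => Disjoint T G
  down_closed := by
    intro s t hs hts
    simp only [Finset.mem_filter] at hs ⊢
    exact ⟨K.down_closed hs.1 hts, hs.2.mono_right hts⟩

/-- The induced subcomplex of `K` on a set `W` of vertices. -/
def restrict (K : SComplex V) (W : Finset V) : SComplex V where
  faces := K.faces.filter fun G => G ⊆ W
  down_closed := by
    intro s t hs hts
    simp only [Finset.mem_filter] at hs ⊢
    exact ⟨K.down_closed hs.1 hts, hts.trans hs.2⟩

/-- The subcomplex of faces of cardinality at most `m`; as cardinality = dimension + 1, this is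
the `(m-1)`-skeleton `Δ^{(m-1)}`. -/
def skelCard (K : SComplex V) (m : ℕ) : SComplex V where
  faces := K.faces.filter fun G => G.card ≤ m
  down_closed := by
    intro s t hs hts
    simp only [Finset.mem_filter] at hs ⊢
    exact ⟨K.down_closed hs.1 hts, le_trans (Finset.card_le_card hts) hs.2⟩

/-- `K.trunc j` is `[Δ]_{>j}`, the order complex of the poset of faces of `K` of cardinality
(equivalently, of height in the face poset) `> j`: its faces are the chains of such faces.
For `j = 0` this is the barycentric subdivision of `K`. -/
def trunc (K : SComplex V) (j : ℕ) : SComplex (Finset V) where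
  faces := K.faces.powerset.filter fun C =>
    (∀ s ∈ C, j < s.card) ∧ ∀ s ∈ C, ∀ t ∈ C, s ⊆ t ∨ t ⊆ s
  down_closed := by
    intro s t hs hts
    simp only [Finset.mem_powerset, Finset.mem_filter] at hs ⊢
    exact ⟨hts.trans hs.1, fun a ha => hs.2.1 a (hts ha),
      fun a ha b hb => hs.2.2 a (hts ha) b (hts hb)⟩

/-- `Δ_A`: the complex obtained from `K` by deleting all faces containing a member of `A`. -/
def deleteAbove (K : SComplex V) (A : Finset (Finset V)) : SComplex V where
  faces := K.faces.filter fun s => ∀ τ ∈ A, ¬ τ ⊆ s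
  down_closed := by
    intro s t hs hts
    simp only [Finset.mem_filter] at hs ⊢
    exact ⟨K.down_closed hs.1 hts, fun τ hτ hsub => hs.2 τ hτ (hsub.trans hts)⟩

/-- The number of faces of `K` of cardinality `i`, i.e. the face number `f_{i-1}(K)`. -/
def faceCount (K : SComplex V) (i : ℕ) : ℕ := (K.faces.filter fun s => s.card = i).card

/-- The Euler characteristic `χ(K) = Σ_{i ≥ 0} (-1)^i f_i(K)`. -/
def eulerChar (K : SComplex V) : ℤ :=
  ∑ s ∈ K.faces.filter (fun s => s ≠ ∅), (-1 : ℤ) ^ (s.card - 1)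

/-- The reduced Euler characteristic `χ̃(K) = χ(K) - 1`. -/
def reducedEulerChar (K : SComplex V) : ℤ := eulerChar K - 1

end SComplex

/-! ### Simplicial homology with coefficients in a field `k` -/

/-- An arbitrary linear order on a finite type. -/
noncomputable def arbOrder (V : Type) [Fintype V] : LinearOrder V :=
  LinearOrder.lift' (Fintype.equivFin V) (Equiv.injective _)

namespace SComplex

variable {V : Type} [DecidableEq V]

/-- The faces of `K` of cardinality `n`, as a type. -/
def Faces (K : SComplex V) (n : ℕ) : Type :=
  {s : Finset V // s ∈ K.faces ∧ s.card = n}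

/-- The space of reduced simplicial `n`-chains of `K`: formal `k`-linear combinations of the
faces of cardinality `n` (such a face has dimension `n - 1`; the empty face sits in degree `0`,
which produces *reduced* homology). -/
abbrev ChainsOf (k : Type) [Field k] (K : SComplex V) (n : ℕ) : Type := Faces K n →₀ k

variable (k : Type) [Field k] [Fintype V]

/-- The simplicial boundary map, with signs determined by an arbitrary but fixed linear order
on the vertices. -/
noncomputable def bd (K : SComplex V) (n : ℕ) :
    ChainsOf k K n →ₗ[k] ChainsOf k K (n - 1) :=
  letI : LinearOrder V := arbOrder V
  Finsupp.lsum k fun s : Faces K n =>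
    LinearMap.toSpanSingleton k (ChainsOf k K (n - 1))
      (∑ x ∈ s.1.attach,
        ((-1 : k) ^ (s.1.filter (fun y => y < x.1)).card) •
          Finsupp.single
            (⟨s.1.erase x.1,
              K.down_closed s.2.1 (Finset.erase_subset _ _),
              by rw [Finset.card_erase_of_mem x.2, s.2.2]⟩ : Faces K (n - 1))
            (1 : k))

/-- `HVanish k K i` says that the reduced simplicial homology `H̃_{i-1}(K; k)` vanishes.
Note the indexing convention: the index `i` is the *cardinality* of the relevant faces, so this
is reduced homology in topological degree `i - 1`; e.g. `HVanish k K 1` says `H̃₀(K; k) = 0`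
(`K` is connected and nonempty) and `HVanish k K 0` says `H̃₋₁(K; k) = 0` (`K` has a face).
Since the cycles in degree `i - 1` are `ker ∂ᵢ` and the boundaries are `im ∂ᵢ₊₁`, and the
boundaries are always contained in the cycles, vanishing of homology says exactly that every
cycle is a boundary. -/
def HVanish (K : SComplex V) (i : ℕ) : Prop :=
  LinearMap.ker (bd k K i) ≤ LinearMap.range (bd k K (i + 1))

/-- `redHomologyRank k K i` is the dimension `dim_k H̃_{i-1}(K; k)` of the reduced simplicial
homology of `K` in topological degree `i - 1` (cardinality index `i`), namely the dimension of
the cycles `ker ∂ᵢ` modulo the boundaries `im ∂ᵢ₊₁`. -/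
noncomputable def redHomologyRank (K : SComplex V) (i : ℕ) : ℕ :=
  Module.finrank k ↥(LinearMap.ker (bd k K i)) -
    Module.finrank k ↥(LinearMap.range (bd k K (i + 1)) ⊓ LinearMap.ker (bd k K i))

end SComplex

/-! ### Depth, Serre conditions, and Stanley–Reisner rings -/

/-- The length of a longest regular sequence on `R` contained in the ideal `I`
(the `I`-depth of `R`). -/
noncomputable def depthIn (R : Type) [CommRing R] (I : Ideal R) : ℕ :=
  sSup {n : ℕ | ∃ rs : List R, rs.length = n ∧ (∀ r ∈ rs, r ∈ I) ∧
    RingTheory.Sequence.IsRegular R rs}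

/-- Serre's condition `(S_ℓ)` for a commutative ring:
`depth R_p ≥ min {ℓ, dim R_p}` for every prime `p`. -/
def SerreCondS (ℓ : ℕ) (R : Type) [CommRing R] : Prop :=
  ∀ (p : Ideal R) (hp : p.IsPrime),
    haveI := hp
    min ((ℓ : ℕ∞) : WithBot ℕ∞) (ringKrullDim (Localization.AtPrime p)) ≤
      ((depthIn (Localization.AtPrime p)
        (IsLocalRing.maximalIdeal (Localization.AtPrime p)) : ℕ∞) : WithBot ℕ∞)

namespace SComplex

variable {V : Type} [DecidableEq V] (k : Type) [Field k]

/-- The Stanley–Reisner ideal of `K`: generated by the squarefree monomials supported on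
non-faces. -/
noncomputable def srIdeal (K : SComplex V) : Ideal (MvPolynomial V k) :=
  Ideal.span ((fun s : Finset V => ∏ v ∈ s, MvPolynomial.X v) '' {s : Finset V | s ∉ K.faces})

/-- The Stanley–Reisner ring `k[Δ]`. -/
noncomputable abbrev SRRing (K : SComplex V) : Type := MvPolynomial V k ⧸ srIdeal k K

/-- `depth k[Δ]`: the depth of the Stanley–Reisner ring with respect to its irrelevant
(graded maximal) ideal. -/
noncomputable def srDepth (K : SComplex V) : ℕ :=
  depthIn (SRRing k K)
    (Ideal.span (Set.range fun v : V => Ideal.Quotient.mk (srIdeal k K) (MvPolynomial.X v)))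

/-- `k[Δ]` satisfies Serre's condition `(S_ℓ)`. -/
def SerreS (ℓ : ℕ) (K : SComplex V) : Prop := SerreCondS ℓ (SRRing k K)

end SComplex

/-! ### Order complexes of finite posets -/

/-- The order complex `O(P)` of a finite poset: its faces are the chains of `P`. -/
def orderComplex (P : Type) [DecidableEq P] [Fintype P] [PartialOrder P]
    [∀ a b : P, Decidable (a ≤ b)] : SComplex P where
  faces := Finset.univ.filter fun C : Finset P => ∀ a ∈ C, ∀ b ∈ C, a ≤ b ∨ b ≤ a
  down_closed := by
    intro s t hs hts
    simp only [Finset.mem_filter, Finset.mem_univ, true_and] at hs ⊢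
    exact fun a ha b hb => hs a (hts ha) b (hts hb)

/-- The height of an element of a finite poset: the maximal cardinality of a chain with top
element `p` (so minimal elements have height `1`). -/
def pheight {P : Type} [DecidableEq P] [Fintype P] [PartialOrder P]
    [∀ a b : P, Decidable (a ≤ b)] (p : P) : ℕ :=
  Finset.sup (Finset.univ.filter fun C : Finset P =>
    p ∈ C ∧ (∀ a ∈ C, a ≤ p) ∧ ∀ a ∈ C, ∀ b ∈ C, a ≤ b ∨ b ≤ a) Finset.card

/-- The height `ht P` of a finite poset: the maximal cardinality of a chain. -/
def pheightMax (P : Type) [DecidableEq P] [Fintype P] [PartialOrder P]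
    [∀ a b : P, Decidable (a ≤ b)] : ℕ :=
  Finset.univ.sup (pheight (P := P))

/-- `O(P_{>j})`: the full subcomplex of the order complex on the elements of height `> j`. -/
def ocAbove (P : Type) [DecidableEq P] [Fintype P] [PartialOrder P]
    [∀ a b : P, Decidable (a ≤ b)] (j : ℕ) : SComplex P :=
  (orderComplex P).restrict (Finset.univ.filter fun p => j < pheight p)

/-- The face poset `F(Δ)` of a simplicial complex: the nonempty faces, ordered by inclusion. -/
abbrev SComplex.FacePoset {V : Type} [DecidableEq V] (K : SComplex V) : Type :=
  {s : Finset V // s ∈ K.faces ∧ s ≠ ∅}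

instance {V : Type} [DecidableEq V] (K : SComplex V) :
    ∀ a b : K.FacePoset, Decidable (a ≤ b) := fun a b =>
  decidable_of_iff (a.1 ≤ b.1) Subtype.coe_le_coe

namespace SComplex

section Koszul

open scoped Pointwise

variable {V : Type} [DecidableEq V] [Fintype V]

/-- The incidence sign of the vertex `v` in `S`, for the fixed order on the vertices. -/
noncomputable def sgn (v : V) (S : Finset V) : ℤ :=
  letI : LinearOrder V := arbOrder V
  (-1) ^ (S.filter (fun y => y < v)).card

omit [DecidableEq V] in
theorem sgn_mul_self (v : V) (S : Finset V) : sgn v S * sgn v S = 1 := by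
  rw [sgn, ← mul_pow]; simp

omit [DecidableEq V] in
theorem sgn_smul_sgn_smul {M : Type*} [AddCommGroup M] (v : V) (S : Finset V) (m : M) :
    sgn v S • sgn v S • m = m := by
  rw [smul_smul, sgn_mul_self, one_smul]

theorem sgn_union {N G : Finset V} (h : Disjoint N G) (v : V) :
    sgn v (N ∪ G) = sgn v N * sgn v G := by
  let _ : LinearOrder V := arbOrder V
  unfold sgn
  rw [← pow_add, filter_union, card_union_of_disjoint (disjoint_filter_filter h)]

omit [DecidableEq V] in
theorem sgn_singleton_swap {u v : V} (h : u ≠ v) : sgn v {u} = - sgn u {v} := by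
  let _ : LinearOrder V := arbOrder V
  unfold sgn
  rw [filter_singleton, filter_singleton]
  rcases lt_or_gt_of_ne h with h | h
  · rw [if_pos h, if_neg h.not_gt]; simp
  · rw [if_neg h.not_gt, if_pos h]; simp

theorem sgn_eq_mul_sgn_erase {S : Finset V} {u : V} (hu : u ∈ S) (v : V) :
    sgn v S = sgn v {u} * sgn v (S.erase u) := by
  rw [← sgn_union (by simp), ← insert_eq, insert_erase hu]

theorem sgn_mul_sgn_erase {S : Finset V} {u v : V} (hu : u ∈ S) (hv : v ∈ S) (h : u ≠ v) :
    sgn u S * sgn v (S.erase u) = - (sgn v S * sgn u (S.erase v)) := by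
  rw [sgn_eq_mul_sgn_erase hv u, sgn_eq_mul_sgn_erase hu v, sgn_singleton_swap h]
  ring

variable {R : Type*} [CommRing R] {M : Type*} [AddCommGroup M] [Module R M]

/-- The Koszul differential of the family `x` on `M`-valued cochains. -/
noncomputable def kd (x : V → R) (φ : Finset V → M) (S : Finset V) : M :=
  ∑ v ∈ S, sgn v S • x v • φ (S.erase v)

/-- Contraction of cochains with the vertex `b`. -/
noncomputable def contract (b : V) (φ : Finset V → M) (G : Finset V) : M :=
  if b ∈ G then 0 else sgn b (insert b G) • φ (insert b G)

theorem kd_congr {x : V → R} {φ ψ : Finset V → M} {S : Finset V}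
    (h : ∀ v ∈ S, φ (S.erase v) = ψ (S.erase v)) : kd x φ S = kd x ψ S :=
  sum_congr rfl fun v hv => by rw [h v hv]

theorem kd_add (x : V → R) (φ ψ : Finset V → M) (S : Finset V) :
    kd x (fun G => φ G + ψ G) S = kd x φ S + kd x ψ S := by
  simp only [kd, smul_add, sum_add_distrib]

theorem kd_sub (x : V → R) (φ ψ : Finset V → M) (S : Finset V) :
    kd x (fun G => φ G - ψ G) S = kd x φ S - kd x ψ S := by
  simp only [kd, smul_sub, sum_sub_distrib]

theorem kd_smul (x : V → R) (r : R) (φ : Finset V → M) (S : Finset V) :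
    kd x (fun G => r • φ G) S = r • kd x φ S := by
  simp only [kd, smul_sum]
  refine sum_congr rfl fun v _ => ?_
  rw [smul_comm r, smul_comm r]

theorem kd_eq_zero {x : V → R} {φ : Finset V → M} {S : Finset V}
    (h : ∀ v ∈ S, φ (S.erase v) = 0) : kd x φ S = 0 :=
  sum_eq_zero fun v hv => by rw [h v hv, smul_zero, smul_zero]

theorem map_kd {N : Type*} [AddCommGroup N] [Module R N] (f : M →ₗ[R] N) (x : V → R)
    (φ : Finset V → M) (S : Finset V) : f (kd x φ S) = kd x (fun G => f (φ G)) S := by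
  simp only [kd, map_sum, map_zsmul, map_smul]

/-- The differential, expanded at a vertex `b` of `F`. -/
theorem kd_eq_of_mem (x : V → R) (φ : Finset V → M) {F : Finset V} {b : V} (hb : b ∈ F) :
    kd x φ F = sgn b F • (x b • φ (F.erase b) - kd x (contract b φ) (F.erase b)) := by
  unfold kd
  rw [← add_sum_erase F _ hb, smul_sub, sub_eq_add_neg]
  congr 1
  rw [smul_sum, ← sum_neg_distrib]
  refine sum_congr rfl fun v hv => ?_
  have hvb : v ≠ b := (mem_erase.1 hv).1
  have hvF : v ∈ F := (mem_erase.1 hv).2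
  have e : insert b ((F.erase b).erase v) = F.erase v := by
    rw [erase_right_comm, insert_erase (mem_erase.2 ⟨hvb.symm, hb⟩)]
  rw [contract, if_neg (by simp), e, smul_comm (x v) (sgn b (F.erase v)), smul_smul, smul_smul,
    ← neg_smul]
  congr 1
  have h := sgn_mul_sgn_erase hvF hb hvb
  calc sgn v F = sgn v F * sgn b (F.erase v) * sgn b (F.erase v) := by
        rw [mul_assoc, sgn_mul_self, mul_one]
    _ = _ := by rw [h]; ring

theorem kd_insert (x : V → R) (φ : Finset V → M) {G : Finset V} {b : V} (hb : b ∉ G) :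
    kd x φ (insert b G) = sgn b (insert b G) • (x b • φ G - kd x (contract b φ) G) := by
  rw [kd_eq_of_mem x φ (mem_insert_self b G), erase_insert hb]

/-- Contraction is a homotopy from multiplication by `x b` to zero. -/
theorem kd_contract_add_contract_kd (x : V → R) (φ : Finset V → M) (b : V) (G : Finset V) :
    kd x (contract b φ) G + contract b (kd x φ) G = x b • φ G := by
  by_cases hb : b ∈ G
  · rw [kd_eq_of_mem x _ hb, contract, if_neg (by simp), insert_erase hb, contract, if_pos hb,
      kd_eq_zero, sub_zero, add_zero, smul_comm (x b), sgn_smul_sgn_smul]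
    intro v _
    rw [contract]
    split_ifs with h
    · rfl
    · rw [contract, if_pos (by simp), smul_zero]
  · rw [contract, if_neg hb, kd_insert x φ hb, sgn_smul_sgn_smul]
    abel

theorem kd_kd (x : V → R) (φ : Finset V → M) (S : Finset V) : kd x (kd x φ) S = 0 := by
  induction S using Finset.induction_on generalizing φ with
  | empty => simp [kd]
  | insert b G hb ih =>
    rw [kd_insert x _ hb]
    have h : kd x (contract b (kd x φ)) G = kd x (fun H => x b • φ H - kd x (contract b φ) H) G :=
      kd_congr fun v _ => by
        rw [← kd_contract_add_contract_kd x φ b]; abel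
    rw [h, kd_sub, kd_smul, ih]
    simp

/-- The cohomology in degree `i` of the differential `kd x`, restricted to the sets satisfying
`P`, vanishes. -/
def CoVanish (M : Type*) [AddCommGroup M] [Module R M] (x : V → R) (P : Finset V → Prop)
    (i : ℕ) : Prop :=
  ∀ φ : Finset V → M, (∀ S, P S → S.card = i + 1 → kd x φ S = 0) →
    ∃ ψ : Finset V → M, ∀ S, P S → S.card = i → φ S = kd x ψ S

theorem CoVanish.of_forall_not {x : V → R} {P : Finset V → Prop} (h : ∀ S, ¬ P S) (i : ℕ) :
    CoVanish M x P i :=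
  fun _ _ => ⟨0, fun S hS => (h S hS).elim⟩

theorem exists_kd_eq_smul {x : V → R} {i : ℕ} {φ : Finset V → M}
    (hφ : ∀ S, S.card = i + 1 → kd x φ S = 0) {a : R} (ha : a ∈ Ideal.span (Set.range x)) :
    ∃ ψ : Finset V → M, ∀ S, S.card = i → a • φ S = kd x ψ S := by
  induction ha using Submodule.span_induction with
  | mem a ha =>
    obtain ⟨b, rfl⟩ := ha
    refine ⟨contract b φ, fun S hS => ?_⟩
    rw [← kd_contract_add_contract_kd x φ b, add_eq_left, contract]
    split_ifs with h
    · rfl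
    · rw [hφ _ (by rw [card_insert_of_notMem h, hS]), smul_zero]
  | zero => exact ⟨0, fun S _ => by rw [zero_smul, kd_eq_zero]; simp⟩
  | add a c _ _ iha ihc =>
    obtain ⟨ψ, hψ⟩ := iha
    obtain ⟨χ, hχ⟩ := ihc
    exact ⟨fun G => ψ G + χ G, fun S hS => by rw [kd_add, add_smul, hψ S hS, hχ S hS]⟩
  | smul r a _ iha =>
    obtain ⟨ψ, hψ⟩ := iha
    exact ⟨fun G => r • ψ G, fun S hS => by rw [kd_smul, smul_assoc, hψ S hS]⟩

theorem mk_eq_zero_iff {a : R} {m : M} :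
    Submodule.Quotient.mk (p := a • (⊤ : Submodule R M)) m = 0 ↔ ∃ n : M, a • n = m := by
  rw [Submodule.Quotient.mk_eq_zero, Submodule.mem_smul_pointwise_iff_exists]
  simp

theorem CoVanish.quotSMulTop {x : V → R} {t : ℕ} {a : R} (ha : IsSMulRegular M a)
    (h : ∀ i < t + 1, CoVanish M x (fun _ => True) i) :
    ∀ i < t, CoVanish (QuotSMulTop a M) x (fun _ => True) i := by
  intro i hi φ' hφ'
  let π : M →ₗ[R] QuotSMulTop a M := Submodule.mkQ _
  have hπ : Function.Surjective π := Submodule.mkQ_surjective _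
  choose φ hφ using fun S => hπ (φ' S)
  obtain rfl : (fun S => π (φ S)) = φ' := funext hφ
  have hd : ∀ S : Finset V, ∃ m : M, S.card = i + 1 → a • m = kd x φ S := by
    intro S
    by_cases hS : S.card = i + 1
    · have := hφ' S trivial hS
      rw [← map_kd] at this
      obtain ⟨m, hm⟩ := mk_eq_zero_iff.1 this
      exact ⟨m, fun _ => hm⟩
    · exact ⟨0, fun h => (hS h).elim⟩
  choose ψ hψ using hd
  obtain ⟨η, hη⟩ := h (i + 1) (by omega) ψ fun S _ hS => ha <| by
    change a • _ = a • _
    rw [← kd_smul, smul_zero, ← kd_kd x φ S]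
    exact kd_congr fun v hv => hψ _ (by rw [card_erase_of_mem hv, hS]; rfl)
  obtain ⟨ζ, hζ⟩ := h i (by omega) (fun S => φ S - a • η S) fun S _ hS => by
    rw [kd_sub, kd_smul, ← hη S trivial hS, hψ S hS, sub_self]
  refine ⟨fun S => π (ζ S), fun S _ hS => ?_⟩
  rw [← map_kd, ← hζ S trivial hS, map_sub, eq_comm, sub_eq_self]
  exact mk_eq_zero_iff.2 ⟨_, rfl⟩

theorem CoVanish.of_quotSMulTop {x : V → R} {t : ℕ} {a : R} (ha : IsSMulRegular M a)
    (hax : a ∈ Ideal.span (Set.range x))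
    (h : ∀ i < t, CoVanish (QuotSMulTop a M) x (fun _ => True) i) :
    ∀ i < t + 1, CoVanish M x (fun _ => True) i := by
  intro i hi φ hφ
  let π : M →ₗ[R] QuotSMulTop a M := Submodule.mkQ _
  have hπ : Function.Surjective π := Submodule.mkQ_surjective _
  obtain ⟨ψ, hψ⟩ := exists_kd_eq_smul (fun S hS => hφ S trivial hS) hax
  rcases i with _ | i
  · refine ⟨0, fun S _ hS => ha ?_⟩
    change a • _ = a • _
    obtain rfl := card_eq_zero.1 hS
    rw [hψ _ rfl]
    simp [kd]
  obtain ⟨η', hη'⟩ := h i (by omega) (fun S => π (ψ S)) fun S _ hS => by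
    rw [← map_kd, ← hψ S hS]
    exact mk_eq_zero_iff.2 ⟨_, rfl⟩
  choose η hη using fun S => hπ (η' S)
  obtain rfl : (fun S => π (η S)) = η' := funext hη
  have hd : ∀ S : Finset V, ∃ m : M, S.card = i → a • m = ψ S - kd x η S := by
    intro S
    by_cases hS : S.card = i
    · have := hη' S trivial hS
      rw [← map_kd, ← sub_eq_zero, ← map_sub] at this
      obtain ⟨m, hm⟩ := mk_eq_zero_iff.1 this
      exact ⟨m, fun _ => hm⟩
    · exact ⟨0, fun h => (hS h).elim⟩
  choose ζ hζ using hd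
  refine ⟨ζ, fun S _ hS => ha ?_⟩
  change a • _ = a • _
  rw [hψ S hS, ← kd_smul, ← sub_zero (kd x ψ S), ← kd_kd x η S, ← kd_sub]
  exact kd_congr fun v hv => (hζ _ (by rw [card_erase_of_mem hv, hS]; rfl)).symm

theorem exists_isSMulRegular [IsNoetherianRing R] [Module.Finite R M] {x : V → R}
    (h : CoVanish M x (fun _ => True) 0) :
    ∃ a ∈ Ideal.span (Set.range x), IsSMulRegular M a := by
  by_contra! hcon
  obtain ⟨p, hp, hle⟩ : ∃ p ∈ associatedPrimes R M, Ideal.span (Set.range x) ≤ p := by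
    apply (Ideal.subset_union_prime_finite (associatedPrimes.finite R M) ⊥ ⊥
      fun I hI _ _ => IsAssociatedPrime.isPrime hI).mp
    rw [biUnion_associatedPrimes_eq_compl_regular R M]
    exact fun r hr => hcon r hr
  obtain ⟨hpp, m, hm⟩ := isAssociatedPrime_iff.1 hp
  have hmem : ∀ r : R, r ∈ p ↔ r • m = 0 := fun r => by
    rw [hm, Submodule.mem_colon_singleton, Submodule.mem_bot]
  obtain ⟨ψ, hψ⟩ := h (fun _ => m) fun S _ hS => by
    refine sum_eq_zero fun v _ => ?_
    rw [(hmem _).1 (hle (Ideal.subset_span (Set.mem_range_self v))), smul_zero]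
  have hm0 : m = 0 := by rw [hψ ∅ trivial rfl]; simp [kd]
  exact hpp.ne_top ((Ideal.eq_top_iff_one _).2 ((hmem 1).2 (by rw [hm0, smul_zero])))

open RingTheory.Sequence in
/-- Depth sensitivity of the Koszul complex. -/
theorem exists_isWeaklyRegular_iff [IsNoetherianRing R] (x : V → R) (t : ℕ) :
    ∀ (M : Type*) [AddCommGroup M] [Module R M] [Module.Finite R M],
    (∃ rs : List R, rs.length = t ∧ (∀ r ∈ rs, r ∈ Ideal.span (Set.range x)) ∧
      IsWeaklyRegular M rs) ↔ ∀ i < t, CoVanish M x (fun _ => True) i := by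
  induction t with
  | zero =>
    intro M _ _ _
    exact ⟨fun _ i hi => (Nat.not_lt_zero i hi).elim, fun _ => ⟨[], rfl, by simp, .nil R M⟩⟩
  | succ t ih =>
    intro M _ _ _
    constructor
    · rintro ⟨_ | ⟨a, rs⟩, hlen, hmem, hreg⟩
      · simp at hlen
      · rw [isWeaklyRegular_cons_iff] at hreg
        exact CoVanish.of_quotSMulTop hreg.1 (hmem a (by simp))
          ((ih _).1 ⟨rs, by simpa using hlen, fun r hr => hmem r (by simp [hr]), hreg.2⟩)
    · intro h
      obtain ⟨a, ha, hreg⟩ := exists_isSMulRegular (h 0 (by omega))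
      obtain ⟨rs, hlen, hmem, hrs⟩ := (ih _).2 (CoVanish.quotSMulTop hreg h)
      exact ⟨a :: rs, by simpa using hlen, by simpa [ha] using hmem, .cons hreg hrs⟩

end Koszul

end SComplex

namespace SComplex

section Exactness

variable {V : Type} [DecidableEq V] [Fintype V] {R : Type*} [CommRing R]
  {M : Type*} [AddCommGroup M] [Module R M]

theorem CoVanish.congr {x : V → R} {P Q : Finset V → Prop} (h : ∀ S, P S ↔ Q S) {i : ℕ} :
    CoVanish M x P i ↔ CoVanish M x Q i := by
  rw [show P = Q from funext fun S => propext (h S)]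

/-- Cones are acyclic. -/
theorem CoVanish.of_cone {P : Finset V → Prop} {b : V} (hP : ∀ S, P S → P (insert b S)) (i : ℕ) :
    CoVanish M (fun _ : V => (1 : R)) P i := by
  refine fun φ hφ => ⟨contract b φ, fun S hS hi => ?_⟩
  have h := kd_contract_add_contract_kd (fun _ : V => (1 : R)) φ b S
  rw [one_smul] at h
  rw [← h, add_eq_left, contract]
  split_ifs with h
  · rfl
  · rw [hφ _ (hP S hS) (by rw [card_insert_of_notMem h, hi]), smul_zero]

/-- Exactness at the deletion: if the links in `P` of the vertices of the independent set `J` and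
`P` itself have no cohomology in degree `i`, neither does the deletion of `J`. -/
theorem CoVanish.antistar {P : Finset V → Prop} (hP : ∀ S T, P S → T ⊆ S → P T) {J : Finset V}
    (hJ : ∀ a ∈ J, ∀ b ∈ J, a ≠ b → ¬ P {a, b}) {i : ℕ}
    (h : CoVanish M (fun _ : V => (1 : R)) P i)
    (hlink : ∀ b ∈ J, CoVanish M (fun _ : V => (1 : R)) (fun G => b ∉ G ∧ P (insert b G)) i) :
    CoVanish M (fun _ : V => (1 : R)) (fun G => Disjoint J G ∧ P G) i := by
  intro φ hφ
  have hdisj : ∀ b ∈ J, ∀ G, b ∉ G → P (insert b G) → Disjoint J G := by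
    intro b hb G hbG hG
    rw [disjoint_left]
    intro a ha haG
    refine hJ a ha b hb (fun e => hbG (e ▸ haG)) (hP _ _ hG ?_)
    rw [insert_subset_iff, singleton_subset_iff]
    exact ⟨mem_insert_of_mem haG, mem_insert_self b G⟩
  have hl : ∀ b, ∃ η : Finset V → M, b ∈ J → ∀ G, b ∉ G ∧ P (insert b G) → G.card = i →
      φ G = kd (fun _ : V => (1 : R)) η G := by
    intro b
    by_cases hb : b ∈ J
    · obtain ⟨η, hη⟩ := hlink b hb φ fun G hG hi =>
        hφ G ⟨hdisj b hb G hG.1 hG.2, hP _ _ hG.2 (subset_insert b G)⟩ hi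
      exact ⟨η, fun _ => hη⟩
    · exact ⟨0, fun h => (hb h).elim⟩
  choose η hη using hl
  let φ' : Finset V → M := fun F =>
    if Disjoint J F then φ F else ∑ b ∈ J ∩ F, sgn b F • η b (F.erase b)
  have hφ' : ∀ b ∈ J, ∀ G, b ∉ G → Disjoint J G → φ' (insert b G) =
      sgn b (insert b G) • η b G := by
    intro b hb G hbG hG
    have e : J ∩ insert b G = {b} := by
      rw [inter_insert_of_mem hb, disjoint_iff_inter_eq_empty.1 hG]; rfl
    simp only [φ']
    rw [if_neg, e, sum_singleton, erase_insert hbG]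
    exact fun hd => disjoint_left.1 hd hb (mem_insert_self b G)
  obtain ⟨ψ, hψ⟩ := h φ' fun F hF hi => by
    by_cases hd : Disjoint J F
    · rw [← hφ F ⟨hd, hF⟩ hi]
      exact kd_congr fun v _ => if_pos (hd.mono_right (erase_subset v F))
    · obtain ⟨b, hb, hbF⟩ := not_disjoint_iff.1 hd
      obtain ⟨G, hbG, rfl⟩ : ∃ G, b ∉ G ∧ F = insert b G :=
        ⟨F.erase b, by simp, (insert_erase hbF).symm⟩
      have hG : Disjoint J G := hdisj b hb G hbG hF
      have hc : G.card = i := by rw [card_insert_of_notMem hbG] at hi; omega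
      rw [kd_insert _ _ hbG, one_smul]
      rw [show φ' G = φ G from if_pos hG, hη b hb G ⟨hbG, hF⟩ hc, sub_eq_zero.2, smul_zero]
      refine kd_congr fun v hv => ?_
      have hbv : b ∉ G.erase v := fun h => hbG (mem_of_mem_erase h)
      rw [contract, if_neg hbv, hφ' b hb _ hbv (hG.mono_right (erase_subset v G)),
        sgn_smul_sgn_smul]
  refine ⟨ψ, fun G hG hi => ?_⟩
  rw [← hψ G hG.2 hi]
  exact (if_pos hG.1).symm

/-- Exactness at the link of a vertex `b` of the independent set `J`. -/
theorem CoVanish.link {P : Finset V → Prop} (hP : ∀ S T, P S → T ⊆ S → P T) {J : Finset V}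
    (hJ : ∀ a ∈ J, ∀ b ∈ J, a ≠ b → ¬ P {a, b}) {i : ℕ}
    (h : CoVanish M (fun _ : V => (1 : R)) P (i + 1))
    (hast : CoVanish M (fun _ : V => (1 : R)) (fun G => Disjoint J G ∧ P G) i)
    {b : V} (hb : b ∈ J) :
    CoVanish M (fun _ : V => (1 : R)) (fun G => b ∉ G ∧ P (insert b G)) i := by
  intro φ hφ
  let φ' : Finset V → M := fun F => if b ∈ F then sgn b F • φ (F.erase b) else 0
  have hφ' : ∀ G, b ∉ G → φ' (insert b G) = sgn b (insert b G) • φ G := by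
    intro G hbG
    simp only [φ']
    rw [if_pos (mem_insert_self b G), erase_insert hbG]
  obtain ⟨ψ, hψ⟩ := h φ' fun F hF hi => by
    by_cases hbF : b ∈ F
    · obtain ⟨G, hbG, rfl⟩ : ∃ G, b ∉ G ∧ F = insert b G :=
        ⟨F.erase b, by simp, (insert_erase hbF).symm⟩
      have hc : G.card = i + 1 := by rw [card_insert_of_notMem hbG] at hi; omega
      have e : kd (fun _ : V => (1 : R)) (contract b φ') G = kd (fun _ : V => (1 : R)) φ G :=
        kd_congr fun v _ => by
          have hbv : b ∉ G.erase v := fun h => hbG (mem_of_mem_erase h)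
          rw [contract, if_neg hbv, hφ' _ hbv, sgn_smul_sgn_smul]
      rw [kd_insert _ _ hbG, e, hφ G ⟨hbG, hF⟩ hc, show φ' G = 0 from if_neg hbG]
      simp
    · exact kd_eq_zero fun v _ => if_neg fun h => hbF (mem_of_mem_erase h)
  obtain ⟨χ, hχ⟩ := hast ψ fun F hF hi => by
    rw [← hψ F hF.2 hi]
    exact if_neg fun h => disjoint_left.1 hF.1 hb h
  refine ⟨fun G => χ G - contract b ψ G, fun G hG hi => ?_⟩
  have hd : Disjoint J G := by
    rw [disjoint_left]
    intro a ha haG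
    refine hJ a ha b hb (fun e => hG.1 (e ▸ haG)) (hP _ _ hG.2 ?_)
    rw [insert_subset_iff, singleton_subset_iff]
    exact ⟨mem_insert_of_mem haG, mem_insert_self b G⟩
  have e := hψ _ hG.2 (by rw [card_insert_of_notMem hG.1, hi])
  rw [hφ' G hG.1, kd_insert _ _ hG.1, one_smul] at e
  rw [kd_sub, ← hχ G ⟨hd, hP _ _ hG.2 (subset_insert b G)⟩ hi,
    ← sgn_smul_sgn_smul b (insert b G) (φ G), e, sgn_smul_sgn_smul]

end Exactness

section LinkDeletion

variable {V : Type} [DecidableEq V] [Fintype V] (k : Type) [Field k] (K : SComplex V)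

/-- Vanishing of the `i`-th cohomology of the link of `T` in the deletion of `S`. -/
def LDVanish (T S : Finset V) (i : ℕ) : Prop :=
  CoVanish k (fun _ : V => (1 : k)) (fun G => Disjoint T G ∧ Disjoint S (T ∪ G) ∧ T ∪ G ∈ K.faces) i

omit [Fintype V] in
theorem mem_link_antistar {T S G : Finset V} : G ∈ ((K.antistar S).link T).faces ↔
    Disjoint T G ∧ Disjoint S (T ∪ G) ∧ T ∪ G ∈ K.faces := by
  simp only [SComplex.link, SComplex.antistar, mem_filter]
  exact ⟨fun h => ⟨h.2.1, h.2.2.2, h.2.2.1⟩, fun h => ⟨⟨K.down_closed h.2.2 subset_union_right,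
    h.2.1.mono_right subset_union_right⟩, h.1, h.2.2, h.2.1⟩⟩

variable {k K}

theorem LDVanish.antistar {T S J : Finset V} {i : ℕ}
    (hJ : ∀ a ∈ J, ∀ b ∈ J, a ≠ b → ({a, b} : Finset V) ∉ K.faces)
    (h : LDVanish k K T S i) (hlink : ∀ b ∈ J, LDVanish k K (insert b T) S i) :
    LDVanish k K T (J ∪ S) i := by
  by_cases hTJ : Disjoint J T
  · have := CoVanish.antistar (J := J) (fun A B hA hBA => ⟨hA.1.mono_right hBA,
      hA.2.1.mono_right (union_subset_union_right hBA),
      K.down_closed hA.2.2 (union_subset_union_right hBA)⟩)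
      (fun a ha b hb hab hP => hJ a ha b hb hab (K.down_closed hP.2.2 subset_union_right)) h
      fun b hb => (CoVanish.congr fun G => ?_).1 (hlink b hb)
    · refine (CoVanish.congr fun G => ?_).1 this
      rw [disjoint_union_left, disjoint_union_right (s := J)]
      tauto
    · have hbT := disjoint_left.1 hTJ hb
      rw [disjoint_insert_left, insert_union, disjoint_insert_right (t := G), union_insert]
      tauto
  · refine CoVanish.of_forall_not (fun G hG => hTJ ?_) i
    exact (disjoint_union_left.1 hG.2.1).1.mono_right subset_union_left

theorem LDVanish.link {T S J : Finset V} {i : ℕ}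
    (hJ : ∀ a ∈ J, ∀ b ∈ J, a ≠ b → ({a, b} : Finset V) ∉ K.faces)
    (h : LDVanish k K T S (i + 1)) (hast : LDVanish k K T (J ∪ S) i) {b : V} (hb : b ∈ J)
    (hbT : b ∉ T) : LDVanish k K (insert b T) S i := by
  by_cases hTJ : Disjoint J T
  · have := CoVanish.link (J := J) (fun A B hA hBA => ⟨hA.1.mono_right hBA,
      hA.2.1.mono_right (union_subset_union_right hBA),
      K.down_closed hA.2.2 (union_subset_union_right hBA)⟩)
      (fun a ha b hb hab hP => hJ a ha b hb hab (K.down_closed hP.2.2 subset_union_right)) h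
      ((CoVanish.congr fun G => by
        rw [disjoint_union_left, disjoint_union_right (s := J)]; tauto).1 hast) hb
    refine (CoVanish.congr fun G => ?_).1 this
    rw [disjoint_insert_left, insert_union, disjoint_insert_right (t := G), union_insert]
    tauto
  · obtain ⟨a, haJ, haT⟩ := not_disjoint_iff.1 hTJ
    refine CoVanish.of_forall_not (fun G hG => ?_) i
    refine hJ a haJ b hb (fun e => hbT (e ▸ haT)) (K.down_closed hG.2.2 ?_)
    rw [insert_subset_iff, singleton_subset_iff]
    simp [haT]

variable (k K)

/-- Reisner's criterion in terms of links and Hochster's criterion in terms of induced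
subcomplexes agree. -/
theorem links_vanish_iff_deletions_vanish (t : ℕ) :
    (∀ T i, i + T.card < t → LDVanish k K T ∅ i) ↔
      ∀ S i, i + S.card < t → LDVanish k K ∅ S i := by
  constructor
  · intro h S i hi
    suffices H : ∀ T i, i + T.card + S.card < t → LDVanish k K T S i from
      H ∅ i (by simpa using hi)
    clear i hi
    induction S using Finset.induction_on with
    | empty => exact fun T i hi => h T i (by simpa using hi)
    | insert b S hb ih =>
      intro T i hi
      rw [card_insert_of_notMem hb] at hi
      rw [insert_eq]
      refine LDVanish.antistar (by simp) (ih T i (by omega)) fun a _ => ih _ i ?_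
      have := card_insert_le a T
      omega
  · intro h T i hi
    suffices H : ∀ S i, i + S.card + T.card < t → LDVanish k K T S i from
      H ∅ i (by simpa using hi)
    clear i hi
    induction T using Finset.induction_on with
    | empty => exact fun S i hi => h S i (by simpa using hi)
    | insert b T hb ih =>
      intro S i hi
      rw [card_insert_of_notMem hb] at hi
      refine LDVanish.link (J := {b}) (by simp) (ih S (i + 1) (by omega)) (ih _ i ?_)
        (mem_singleton_self b) hb
      rw [← insert_eq]
      have := card_insert_le b S
      omega

end LinkDeletion

section Duality

variable {V : Type} [DecidableEq V] [Fintype V] (k : Type) [Field k] (L : SComplex V)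

theorem dual_bd_single (n : ℕ) (g : Module.Dual k (ChainsOf k L (n - 1))) (s : Faces L n) :
    g (bd k L n (Finsupp.single s 1)) = ∑ x ∈ s.1.attach, sgn x.1 s.1 •
      g (Finsupp.single (⟨s.1.erase x.1, L.down_closed s.2.1 (erase_subset _ _),
        by rw [card_erase_of_mem x.2, s.2.2]⟩ : Faces L (n - 1)) 1) := by
  rw [bd, Finsupp.lsum_single, LinearMap.toSpanSingleton_apply, one_smul]
  refine (map_sum g _ _).trans (sum_congr rfl fun x _ => ?_)
  refine (map_smul g _ _).trans ?_
  rw [sgn, zsmul_eq_mul, smul_eq_mul]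
  push_cast
  rfl

/-- The value of a functional on chains, as a function on all finite sets. -/
noncomputable def dualFun (n : ℕ) (g : Module.Dual k (ChainsOf k L n)) (S : Finset V) : k :=
  open Classical in
  if h : S ∈ L.faces ∧ S.card = n then g (Finsupp.single (⟨S, h⟩ : Faces L n) 1) else 0

theorem dual_bd_single_eq_kd (n : ℕ) (g : Module.Dual k (ChainsOf k L (n - 1))) (s : Faces L n) :
    g (bd k L n (Finsupp.single s 1)) = kd (fun _ : V => (1 : k)) (dualFun k L (n - 1) g) s.1 := by
  rw [dual_bd_single, kd, ← sum_attach s.1]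
  refine sum_congr rfl fun x _ => ?_
  rw [one_smul, dualFun, dif_pos]

/-- Over a field, homology vanishes iff cohomology does. -/
theorem hVanish_iff_coVanish (i : ℕ) :
    HVanish k L i ↔ CoVanish k (fun _ : V => (1 : k)) (fun S => S ∈ L.faces) i := by
  have hext : ∀ {n : ℕ} (g : Finset V → k), ∃ g' : Module.Dual k (ChainsOf k L n),
      ∀ S, S ∈ L.faces → S.card = n → dualFun k L n g' S = g S := by
    intro n g
    refine ⟨Finsupp.linearCombination k fun s : Faces L n => g s.1, fun S hS hn => ?_⟩
    rw [dualFun, dif_pos ⟨hS, hn⟩]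
    exact (Finsupp.linearCombination_single k _ _).trans (one_smul k _)
  constructor
  · intro h φ hφ
    obtain ⟨g, hg⟩ := hext (n := i) φ
    have hker : g ∘ₗ bd k L (i + 1) = 0 := by
      refine Finsupp.lhom_ext' fun s => LinearMap.ext_ring ?_
      refine (dual_bd_single_eq_kd k L (i + 1) g s).trans ?_
      rw [LinearMap.zero_comp, LinearMap.zero_apply, ← hφ s.1 s.2.1 s.2.2]
      exact kd_congr fun v hv => hg _ (L.down_closed s.2.1 (erase_subset _ _))
        (by rw [card_erase_of_mem hv, s.2.2]; rfl)
    have hmem : g ∈ (LinearMap.ker (bd k L i)).dualAnnihilator := by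
      rw [Submodule.mem_dualAnnihilator]
      intro z hz
      obtain ⟨w, rfl⟩ := h hz
      exact LinearMap.congr_fun hker w
    rw [← LinearMap.range_dualMap_eq_dualAnnihilator_ker] at hmem
    obtain ⟨f, rfl⟩ := hmem
    refine ⟨dualFun k L (i - 1) f, fun S hS hi => ?_⟩
    rw [← dual_bd_single_eq_kd k L i f ⟨S, hS, hi⟩, ← hg S hS hi, dualFun, dif_pos ⟨hS, hi⟩]
    rfl
  · intro h z hz
    by_contra hcon
    obtain ⟨g, hgz, hg⟩ := Submodule.exists_le_ker_of_notMem hcon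
    obtain ⟨ψ, hψ⟩ := h (dualFun k L i g) fun S hS hi => by
      refine (dual_bd_single_eq_kd k L (i + 1) g ⟨S, hS, hi⟩).symm.trans ?_
      exact hg (LinearMap.mem_range_self _ _)
    obtain ⟨f, hf⟩ := hext (n := i - 1) ψ
    refine hgz ?_
    have : g = f ∘ₗ bd k L i := by
      refine Finsupp.lhom_ext' fun s => LinearMap.ext_ring ?_
      refine Eq.trans ?_ (dual_bd_single_eq_kd k L i f s).symm
      have e := hψ s.1 s.2.1 s.2.2
      rw [dualFun, dif_pos s.2] at e
      refine e.trans (kd_congr fun v hv => (hf _ (L.down_closed s.2.1 (erase_subset _ _))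
        (by rw [card_erase_of_mem hv, s.2.2])).symm)
    rw [this, LinearMap.comp_apply, LinearMap.mem_ker.1 hz, map_zero]

theorem hVanish_link_antistar_iff (T S : Finset V) (i : ℕ) :
    HVanish k ((L.antistar S).link T) i ↔ LDVanish k L T S i := by
  rw [hVanish_iff_coVanish]
  exact CoVanish.congr fun G => mem_link_antistar L

theorem hVanish_link_iff (T : Finset V) (i : ℕ) :
    HVanish k (L.link T) i ↔ LDVanish k L T ∅ i := by
  rw [← hVanish_link_antistar_iff, hVanish_iff_coVanish, hVanish_iff_coVanish]
  simp [SComplex.link, SComplex.antistar]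

end Duality

end SComplex

namespace SComplex

section Multigrading

open MvPolynomial

variable {V : Type} [DecidableEq V]

/-- The exponent vector of the squarefree monomial supported on `G`. -/
noncomputable def ind (G : Finset V) : V →₀ ℕ := ∑ v ∈ G, Finsupp.single v 1

theorem ind_apply (G : Finset V) (v : V) : ind G v = if v ∈ G then 1 else 0 := by
  simp [ind, Finsupp.finsetSum_apply, Finsupp.single_apply]

theorem support_ind (G : Finset V) : (ind G).support = G := by
  ext v; simp [ind_apply]

theorem ind_le_iff {G : Finset V} {a : V →₀ ℕ} : ind G ≤ a ↔ G ⊆ a.support := by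
  refine ⟨fun h v hv => ?_, fun h v => ?_⟩
  · have := h v
    rw [ind_apply, if_pos hv] at this
    exact Finsupp.mem_support_iff.2 (by omega)
  · rw [ind_apply]
    split_ifs with hv
    · exact Nat.one_le_iff_ne_zero.2 (Finsupp.mem_support_iff.1 (h hv))
    · exact Nat.zero_le _

theorem single_add_ind_erase {G : Finset V} {v : V} (hv : v ∈ G) :
    Finsupp.single v 1 + ind (G.erase v) = ind G :=
  add_sum_erase G (fun v => Finsupp.single v 1) hv

theorem support_add_ind (p : V →₀ ℕ) (G : Finset V) :
    (p + ind G).support = p.support ∪ G := by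
  rw [Finsupp.support_add_eq_union, support_ind]

variable (k : Type) [Field k] (K : SComplex V)

theorem mem_srIdeal_iff {f : MvPolynomial V k} :
    f ∈ srIdeal k K ↔ ∀ a : V →₀ ℕ, a.support ∈ K.faces → coeff a f = 0 := by
  have e : srIdeal k K = Ideal.span ((fun a => monomial a (1 : k)) '' (ind '' {s | s ∉ K.faces})) := by
    rw [srIdeal, Set.image_image]
    congr 2
    ext s
    rw [ind, monomial_sum_one]
    rfl
  rw [e, mem_ideal_span_monomial_image]
  constructor
  · intro h a ha
    by_contra h0
    obtain ⟨_, ⟨s, hs, rfl⟩, hsa⟩ := h a (mem_support_iff.2 h0)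
    exact hs (K.down_closed ha (ind_le_iff.1 hsa))
  · intro h a ha
    exact ⟨_, ⟨a.support, fun hs => mem_support_iff.1 ha (h a hs), rfl⟩, ind_le_iff.2 subset_rfl⟩

variable [Fintype V]

/-- The sign comparing the Koszul differential on sets `N ∪ G` with the one on sets `G`. -/
noncomputable def shuffleSign (N G : Finset V) : ℤ := ∏ v ∈ G, sgn v N

theorem shuffleSign_mul_self (N G : Finset V) : shuffleSign N G * shuffleSign N G = 1 := by
  rw [shuffleSign, ← prod_mul_distrib]
  exact prod_eq_one fun v _ => sgn_mul_self v N

theorem shuffleSign_smul_smul {A : Type*} [AddCommGroup A] (N G : Finset V) (m : A) :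
    shuffleSign N G • shuffleSign N G • m = m := by
  rw [smul_smul, shuffleSign_mul_self, one_smul]

/-- The Koszul differential of `k[x]` in a fixed multidegree. -/
theorem coeff_kd_X (Ψ : Finset V → MvPolynomial V k) {N G : Finset V} {p : V →₀ ℕ}
    (hG : Disjoint N G) (hp : Disjoint N p.support) :
    coeff (p + ind G) (kd (X : V → MvPolynomial V k) Ψ (N ∪ G)) = shuffleSign N G •
      kd (fun _ : V => (1 : k))
        (fun H => shuffleSign N H • coeff (p + ind H) (Ψ (N ∪ H))) G := by
  rw [kd, sum_union hG, coeff_add, coeff_sum, coeff_sum, sum_eq_zero, zero_add, kd, smul_sum]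
  · refine sum_congr rfl fun v hv => ?_
    have hvN : v ∉ N := fun h => disjoint_left.1 hG h hv
    have e1 : (N ∪ G).erase v = N ∪ G.erase v := by
      rw [erase_union_distrib, erase_eq_of_notMem hvN]
    have e2 : p + ind G = Finsupp.single v 1 + (p + ind (G.erase v)) := by
      rw [← single_add_ind_erase hv]; abel
    have e3 : shuffleSign N G = sgn v N * shuffleSign N (G.erase v) :=
      (mul_prod_erase G (fun v => sgn v N) hv).symm
    rw [coeff_smul, smul_eq_mul, e1, e2, coeff_X_mul, sgn_union hG, e3, one_smul, smul_smul,
      smul_smul]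
    congr 1
    linear_combination -(sgn v N * sgn v G) * shuffleSign_mul_self N (G.erase v)
  · intro v hv
    rw [coeff_smul, smul_eq_mul, coeff_X_mul', if_neg, smul_zero]
    rw [support_add_ind, mem_union, not_or]
    exact ⟨disjoint_left.1 hp hv, disjoint_left.1 hG hv⟩

theorem mk_kd (Φ : Finset V → MvPolynomial V k) (S : Finset V) :
    Ideal.Quotient.mk (srIdeal k K) (kd (X : V → MvPolynomial V k) Φ S) =
      kd (fun v => Ideal.Quotient.mk (srIdeal k K) (X v))
        (fun G => Ideal.Quotient.mk (srIdeal k K) (Φ G)) S := by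
  simp only [kd, map_sum, map_zsmul, smul_eq_mul, map_mul]

omit [Fintype V] in
/-- Every pair of a set `S` and an exponent `a` decomposes as `(N ∪ G, p + ind G)`, where `N` is
disjoint from `G` and from the support of `p`. -/
theorem exists_multidegree (S : Finset V) (a : V →₀ ℕ) :
    ∃ N G : Finset V, ∃ p : V →₀ ℕ, Disjoint N G ∧ Disjoint N p.support ∧ S = N ∪ G ∧
      a = p + ind G := by
  have hle : ind (S ∩ a.support) ≤ a := ind_le_iff.2 inter_subset_right
  refine ⟨S \ a.support, S ∩ a.support, a - ind (S ∩ a.support), ?_, ?_, ?_, ?_⟩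
  · exact disjoint_sdiff_self_left.mono_right inter_subset_right
  · refine disjoint_sdiff_self_left.mono_right fun v hv => ?_
    rw [Finsupp.mem_support_iff, Finsupp.tsub_apply] at hv
    rw [Finsupp.mem_support_iff]
    omega
  · exact (sdiff_union_inter S a.support).symm
  · exact (tsub_add_cancel_of_le hle).symm

theorem coVanish_srRing_iff (i : ℕ) :
    CoVanish (SRRing k K) (fun v => Ideal.Quotient.mk (srIdeal k K) (X v)) (fun _ => True) i ↔
      ∀ N j, j + N.card = i → LDVanish k K ∅ N j := by
  constructor
  · rintro h N j rfl g hg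
    let Φ : Finset V → MvPolynomial V k := fun S =>
      if N ⊆ S then monomial (ind (S \ N)) (shuffleSign N (S \ N) • g (S \ N)) else 0
    obtain ⟨ψ, hψ⟩ := h (fun S => Ideal.Quotient.mk _ (Φ S)) fun S _ hS => by
      rw [← mk_kd, Ideal.Quotient.eq_zero_iff_mem, mem_srIdeal_iff]
      intro a ha
      obtain ⟨N', G, p, hG, hp, rfl, rfl⟩ := exists_multidegree S a
      rw [coeff_kd_X _ _ hG hp]
      rw [support_add_ind] at ha
      by_cases hN : N' = N ∧ p = 0
      · obtain ⟨rfl, rfl⟩ := hN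
        rw [card_union_of_disjoint hG] at hS
        rw [kd_congr (ψ := g), hg G ⟨disjoint_empty_left _, ?_, ?_⟩ (by omega), smul_zero]
        · rwa [empty_union]
        · simpa using ha
        · intro v _
          have hd : Disjoint N' (G.erase v) := hG.mono_right (erase_subset v G)
          simp only [Φ]
          rw [if_pos subset_union_left, union_sdiff_cancel_left hd, zero_add, coeff_monomial,
            if_pos rfl, shuffleSign_smul_smul]
      · rw [kd_eq_zero, smul_zero]
        intro v _
        have hd : Disjoint N' (G.erase v) := hG.mono_right (erase_subset v G)
        simp only [Φ]
        split_ifs with hs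
        · rw [coeff_monomial, if_neg, smul_zero]
          intro e
          refine hN ?_
          have es := congrArg Finsupp.support e
          rw [support_ind, support_add_ind] at es
          have hNN : N' = N := by
            refine Subset.antisymm (fun u hu => ?_) fun u hu => ?_
            · by_contra huN
              have : u ∈ p.support ∪ G.erase v := es ▸ mem_sdiff.2 ⟨mem_union_left _ hu, huN⟩
              rcases mem_union.1 this with h | h
              · exact disjoint_left.1 hp hu h
              · exact disjoint_left.1 hd hu h
            · rcases mem_union.1 (hs hu) with h | h
              · exact h
              · have : u ∈ (N' ∪ G.erase v) \ N := es ▸ mem_union_right _ h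
                exact ((mem_sdiff.1 this).2 hu).elim
          subst hNN
          rw [union_sdiff_cancel_left hd] at e
          exact ⟨rfl, by simpa using e⟩
        · simp
    choose Ψ hΨ using fun S => Ideal.Quotient.mk_surjective (I := srIdeal k K) (ψ S)
    obtain rfl : (fun S => Ideal.Quotient.mk _ (Ψ S)) = ψ := funext hΨ
    refine ⟨fun H => shuffleSign N H • coeff (0 + ind H) (Ψ (N ∪ H)), fun G hG hj => ?_⟩
    simp only [empty_union] at hG
    have hd : Disjoint N G := hG.2.1
    have e := hψ (N ∪ G) trivial (by rw [card_union_of_disjoint hd, hj, add_comm])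
    rw [← mk_kd, Ideal.Quotient.eq, mem_srIdeal_iff] at e
    have e := e (0 + ind G) (by rw [zero_add, support_ind]; exact hG.2.2)
    rw [coeff_sub, coeff_kd_X _ _ hd (by simp), sub_eq_zero] at e
    simp only [Φ] at e
    rw [if_pos subset_union_left, union_sdiff_cancel_left hd, zero_add, coeff_monomial,
      if_pos rfl] at e
    rw [← shuffleSign_smul_smul N G (g G), e, shuffleSign_smul_smul]
  · intro h φ hφ
    choose Φ hΦ using fun S => Ideal.Quotient.mk_surjective (I := srIdeal k K) (φ S)
    obtain rfl : (fun S => Ideal.Quotient.mk _ (Φ S)) = φ := funext hΦ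
    have hΦd : ∀ S, S.card = i + 1 → kd (X : V → MvPolynomial V k) Φ S ∈ srIdeal k K := fun S hS => by
      rw [← Ideal.Quotient.eq_zero_iff_mem, mk_kd]
      exact hφ S trivial hS
    have hex : ∀ (N : Finset V) (p : V →₀ ℕ), ∃ η : Finset V → k, Disjoint N p.support →
        ∀ G, Disjoint N G → p.support ∪ G ∈ K.faces → N.card + G.card = i →
          shuffleSign N G • coeff (p + ind G) (Φ (N ∪ G)) = kd (fun _ : V => (1 : k)) η G := by
      intro N p
      by_cases hp : Disjoint N p.support
      swap
      · exact ⟨0, fun h => (hp h).elim⟩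
      by_cases hN : N.card ≤ i
      swap
      · exact ⟨0, fun _ G _ _ hc => by omega⟩
      have hvan : CoVanish k (fun _ : V => (1 : k))
          (fun G => Disjoint N G ∧ p.support ∪ G ∈ K.faces) (i - N.card) := by
        by_cases hp0 : p = 0
        · refine (CoVanish.congr fun G => ?_).1 (h N (i - N.card) (by omega))
          simp [hp0]
        · obtain ⟨b, hb⟩ := Finsupp.support_nonempty_iff.2 hp0
          refine CoVanish.of_cone (b := b) (fun G hG => ⟨?_, ?_⟩) _
          · rw [disjoint_insert_right]
            exact ⟨disjoint_right.1 hp hb, hG.1⟩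
          · rw [union_insert, insert_eq_of_mem (mem_union_left _ hb)]
            exact hG.2
      obtain ⟨η, hη⟩ := hvan (fun G => shuffleSign N G • coeff (p + ind G) (Φ (N ∪ G)))
        fun G hG hc => by
          have := (mem_srIdeal_iff k K).1 (hΦd (N ∪ G) (by
            rw [card_union_of_disjoint hG.1]; omega)) (p + ind G) (by
            rw [support_add_ind]; exact hG.2)
          rw [coeff_kd_X _ _ hG.1 hp] at this
          rw [← shuffleSign_smul_smul N G (kd _ _ _), this, smul_zero]
      exact ⟨η, fun _ G hG hK hc => hη G ⟨hG, hK⟩ (by omega)⟩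
    choose η hη using hex
    obtain ⟨B, hB⟩ : ∃ B : V →₀ ℕ, ∀ S a, coeff a (Φ S) ≠ 0 → a ≤ B := by
      refine ⟨∑ S, ∑ a ∈ (Φ S).support, a, fun S a ha => ?_⟩
      exact (single_le_sum (f := fun a : V →₀ ℕ => a) (fun _ _ => zero_le)
        (mem_support_iff.2 ha)).trans
        (single_le_sum (f := fun S => ∑ a ∈ (Φ S).support, a) (fun _ _ => zero_le)
          (mem_univ S))
    obtain ⟨Ψ, hΨ⟩ : ∃ Ψ : Finset V → MvPolynomial V k, ∀ (N G : Finset V) (p : V →₀ ℕ),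
        Disjoint N G → Disjoint N p.support →
        coeff (p + ind G) (Ψ (N ∪ G)) = if p ≤ B then shuffleSign N G • η N p G else 0 := by
      classical
      let c : Finset V → (V →₀ ℕ) → k := fun S a =>
        if a - ind (S ∩ a.support) ≤ B then shuffleSign (S \ a.support) (S ∩ a.support) •
          η (S \ a.support) (a - ind (S ∩ a.support)) (S ∩ a.support) else 0
      have hc : ∀ (N G : Finset V) (p : V →₀ ℕ), Disjoint N G → Disjoint N p.support →
          c (N ∪ G) (p + ind G) = if p ≤ B then shuffleSign N G • η N p G else 0 := by
        intro N G p hG hp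
        have e1 : (N ∪ G) \ (p + ind G).support = N := by
          rw [support_add_ind]
          ext u
          have := @disjoint_left _ N G
          have := @disjoint_left _ N p.support
          simp only [mem_sdiff, mem_union]
          grind
        have e2 : (N ∪ G) ∩ (p + ind G).support = G := by
          rw [support_add_ind]
          ext u
          have := @disjoint_left _ N G
          have := @disjoint_left _ N p.support
          simp only [mem_inter, mem_union]
          grind
        simp only [c]
        rw [e1, e2, add_tsub_cancel_right]
      refine ⟨fun S => ∑ a ∈ Finset.Iic (B + ind univ), monomial a (c S a), fun N G p hG hp => ?_⟩
      rw [coeff_sum, ← hc N G p hG hp]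
      simp only [coeff_monomial]
      rw [sum_ite_eq', ite_eq_left_iff]
      intro hmem
      rw [hc N G p hG hp, if_neg]
      · intro hle
        refine hmem (mem_Iic.2 (add_le_add hle (ind_le_iff.2 ?_)))
        rw [support_ind]
        exact subset_univ G
    refine ⟨fun S => Ideal.Quotient.mk _ (Ψ S), fun S _ hS => ?_⟩
    rw [← mk_kd, Ideal.Quotient.eq, mem_srIdeal_iff]
    intro a ha
    obtain ⟨N, G, p, hG, hp, rfl, rfl⟩ := exists_multidegree S a
    rw [support_add_ind] at ha
    rw [card_union_of_disjoint hG] at hS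
    rw [coeff_sub, sub_eq_zero, coeff_kd_X _ _ hG hp]
    by_cases hle : p ≤ B
    · rw [← shuffleSign_smul_smul N G (coeff _ _), hη N p hp G hG ha hS]
      congr 1
      refine kd_congr fun v _ => ?_
      rw [hΨ _ _ _ (hG.mono_right (erase_subset v G)) hp, if_pos hle, shuffleSign_smul_smul]
    · rw [kd_eq_zero, smul_zero]
      · by_contra h0
        exact hle (le_self_add.trans (hB _ _ h0))
      · intro v _
        rw [hΨ _ _ _ (hG.mono_right (erase_subset v G)) hp, if_neg hle, smul_zero]

end Multigrading

end SComplex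

namespace SComplex

section Depth

open MvPolynomial RingTheory.Sequence

variable {V : Type} [DecidableEq V] [Fintype V] (k : Type) [Field k] (K : SComplex V)

omit [Fintype V] in
theorem span_range_mk_X_ne_top (hK : ∅ ∈ K.faces) :
    Ideal.span (Set.range fun v : V => Ideal.Quotient.mk (srIdeal k K) (X v)) ≠ ⊤ := by
  let ε : SRRing k K →+* k := Ideal.Quotient.lift (srIdeal k K) constantCoeff fun f hf => by
    rw [constantCoeff_eq]
    exact (mem_srIdeal_iff k K).1 hf 0 (by simpa using hK)
  intro h
  have hle : Ideal.span (Set.range fun v : V => Ideal.Quotient.mk (srIdeal k K) (X v)) ≤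
      RingHom.ker ε := by
    rw [Ideal.span_le]
    rintro _ ⟨v, rfl⟩
    simp [ε, RingHom.mem_ker]
  exact RingHom.ker_ne_top ε (top_le_iff.1 (h ▸ hle))

/-- The homological criterion for `depth k[Δ] ≥ t`: every `H̃_{i-1}(lk_Δ(T); k)` with
`i + |T| < t` vanishes. -/
def LinksVanish (t : ℕ) : Prop :=
  ∀ T i, i + T.card < t → LDVanish k K T ∅ i

theorem exists_isRegular_iff_linksVanish (hK : ∅ ∈ K.faces) (t : ℕ) :
    (∃ rs : List (SRRing k K), rs.length = t ∧
      (∀ r ∈ rs, r ∈ Ideal.span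
        (Set.range fun v : V => Ideal.Quotient.mk (srIdeal k K) (X v))) ∧
      IsRegular (SRRing k K) rs) ↔ LinksVanish k K t := by
  have hreg : ∀ rs : List (SRRing k K), (∀ r ∈ rs, r ∈ Ideal.span
      (Set.range fun v : V => Ideal.Quotient.mk (srIdeal k K) (X v))) →
      (IsRegular (SRRing k K) rs ↔ IsWeaklyRegular (SRRing k K) rs) := fun rs hrs => by
    rw [isRegular_iff, and_iff_left_iff_imp]
    rintro - h
    refine span_range_mk_X_ne_top k K hK (top_le_iff.1 ?_)
    rw [smul_eq_mul, Ideal.mul_top] at h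
    exact h.trans_le (Ideal.span_le.2 hrs)
  rw [LinksVanish, links_vanish_iff_deletions_vanish]
  refine (exists_congr fun rs => and_congr_right fun _ => and_congr_right (hreg rs)).trans ?_
  rw [exists_isWeaklyRegular_iff]
  simp only [coVanish_srRing_iff]
  exact ⟨fun h S i hi => h _ hi S i rfl, fun h i hi N j hj => h N j (hj ▸ hi)⟩

variable {k K}

theorem LinksVanish.mono {s t : ℕ} (hst : s ≤ t) (h : LinksVanish k K t) : LinksVanish k K s :=
  fun T i hi => h T i (hi.trans_le hst)

theorem LinksVanish.le_rank (hK : ∅ ∈ K.faces) {t : ℕ} (h : LinksVanish k K t) : t ≤ K.rank := by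
  obtain ⟨F, hF, hFK⟩ := exists_mem_eq_sup K.faces ⟨∅, hK⟩ card
  by_contra! ht
  obtain ⟨ψ, hψ⟩ := h F 0 (by rw [zero_add, ← hFK]; exact ht) (fun _ => 1) fun S hS hc => by
    have := le_sup (f := card) hS.2.2
    rw [card_union_of_disjoint hS.1] at this
    omega
  simpa [kd] using hψ ∅ ⟨disjoint_empty_right _, disjoint_empty_left _, by simpa using hF⟩ rfl

variable (k)

theorem srDepth_eq_iff (hK : ∅ ∈ K.faces) (ℓ : ℕ) :
    srDepth k K = ℓ ↔ LinksVanish k K ℓ ∧ ¬ LinksVanish k K (ℓ + 1) := by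
  have hset : srDepth k K = sSup {t | LinksVanish k K t} := by
    simp only [srDepth, depthIn, exists_isRegular_iff_linksVanish k K hK]
  have hbdd : BddAbove {t | LinksVanish k K t} := ⟨K.rank, fun t ht => ht.le_rank hK⟩
  have hne : {t | LinksVanish k K t}.Nonempty := ⟨0, fun _ _ h => (Nat.not_lt_zero _ h).elim⟩
  rw [hset]
  constructor
  · rintro rfl
    exact ⟨Nat.sSup_mem hne hbdd, fun h => (le_csSup hbdd h).not_gt (Nat.lt_succ_self _)⟩
  · rintro ⟨h, h'⟩
    refine le_antisymm (csSup_le hne fun t ht => ?_) (le_csSup hbdd h)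
    by_contra! hlt
    exact h' (LinksVanish.mono hlt ht)

end Depth

end SComplex

/-- Suppose `depth k[Δ] = ℓ` and `H̃_{ℓ-1}(Δ; k) = 0`.  Choose a face `T` of
minimal cardinality with `H̃_{ℓ-|T|-1}(lk_Δ(T); k) ≠ 0`.  If `J` is an independent set of
vertices and `T = T' ∪ {b}` with `b ∈ J`, then for `Δ̃ = ast_Δ(J)` one has
`H̃_{ℓ-|T'|-2}(lk_Δ̃(T'); k) ≠ 0`; in particular `depth k[Δ̃] = ℓ - 1`.
(Recall the indexing convention: `H̃_{i-1}` is `HVanish`/homology at cardinality index `i`, so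
`H̃_{ℓ-|T|-1}` has cardinality index `ℓ - |T|` and `H̃_{ℓ-|T'|-2}` has index `ℓ - |T'| - 1`.) -/
theorem depth_drop_of_independent {V : Type} [DecidableEq V] [Fintype V] (k : Type) [Field k]
    (K : SComplex V) (ℓ : ℕ)
    (hdepth : SComplex.srDepth k K = ℓ)
    (hvanish : SComplex.HVanish k K ℓ)
    (T : Finset V) (hT : T ∈ K.faces)
    (hTnz : ¬ SComplex.HVanish k (K.link T) (ℓ - T.card))
    (hTmin : ∀ T₂ ∈ K.faces,
      ¬ SComplex.HVanish k (K.link T₂) (ℓ - T₂.card) → T.card ≤ T₂.card)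
    (J : Finset V)
    (hJV : ∀ a ∈ J, ({a} : Finset V) ∈ K.faces)
    (hJindep : ∀ a ∈ J, ∀ b ∈ J, a ≠ b → ({a, b} : Finset V) ∉ K.faces)
    (T' : Finset V) (b : V) (hbJ : b ∈ J) (hbT' : b ∉ T') (hdecomp : T = insert b T') :
    ¬ SComplex.HVanish k ((K.antistar J).link T') (ℓ - T'.card - 1) ∧
      SComplex.srDepth k (K.antistar J) = ℓ - 1 := by
  subst hdecomp
  have h0 : ∅ ∈ K.faces := K.down_closed hT (empty_subset _)
  have h0' : ∅ ∈ (K.antistar J).faces := by simpa [SComplex.antistar] using h0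
  obtain ⟨hℓ, hℓ'⟩ := (SComplex.srDepth_eq_iff k h0 ℓ).1 hdepth
  have hcard := card_insert_of_notMem hbT'
  have hle : T'.card + 1 ≤ ℓ := by
    simp only [SComplex.LinksVanish, not_forall] at hℓ'
    obtain ⟨T₂, i, hi, hT₂⟩ := hℓ'
    have hmem : T₂ ∈ K.faces := by
      by_contra hmem
      exact hT₂ (.of_forall_not (fun G hG => hmem (K.down_closed hG.2.2 subset_union_left)) i)
    have hiℓ : i + T₂.card = ℓ := by
      by_contra hne
      exact hT₂ (hℓ T₂ i (by omega))
    have := hTmin T₂ hmem (by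
      rwa [← hiℓ, Nat.add_sub_cancel, SComplex.hVanish_link_iff])
    omega
  have hlink : SComplex.LDVanish k K T' ∅ (ℓ - T'.card - 1 + 1) := by
    rw [Nat.sub_add_cancel (by omega), ← SComplex.hVanish_link_iff]
    by_contra hne
    have := hTmin T' (K.down_closed hT (subset_insert b T')) hne
    omega
  have hnz : ¬ SComplex.HVanish k ((K.antistar J).link T') (ℓ - T'.card - 1) := fun h => by
    rw [SComplex.hVanish_link_antistar_iff, ← union_empty J] at h
    apply hTnz
    rw [SComplex.hVanish_link_iff, hcard, ← Nat.sub_sub]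
    exact hlink.link hJindep h hbJ hbT'
  have hiff : ∀ T i, SComplex.LDVanish k (K.antistar J) T ∅ i ↔ SComplex.LDVanish k K T J i :=
    fun T i => by rw [← SComplex.hVanish_link_iff, SComplex.hVanish_link_antistar_iff]
  refine ⟨hnz, (SComplex.srDepth_eq_iff k h0' (ℓ - 1)).2 ⟨fun S i hi => ?_, fun h => hnz ?_⟩⟩
  · rw [hiff, ← union_empty J]
    refine (hℓ S i (by omega)).antistar hJindep fun a _ => hℓ _ i ?_
    have := card_insert_le a S
    omega
  · rw [SComplex.hVanish_link_iff]
    exact h T' _ (by omega)
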